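/- Let Ω ⊂ ℝ^N be open and bounded, let (ε_k) be positive with ε_k → 0, and let u_k : ℝ^N → ℝ be of class C¹. Let λ be a finite Borel measure on Ω and ρ : Ω → ℝ^N Borel with |ρ| = 1 λ-a.e. Assume: (i) for every bounded continuous φ : Ω → ℝ and all i, j, ∫_Ω ε_k ∂u_k/∂x_i ∂u_k/∂x_j φ dx → ∫_Ω ρ_i ρ_j φ dλ; and (ii) ∫_Ω | ε_k|∇u_k|² − (1 − u_k²)²/ε_k | dx → 0. Let η : ℝ^N → ℝ^N be bounded C¹ with bounded derivatives. Then ∫_Ω [ ( ε_k|∇u_k|²/2 + (1 − u_k²)²/(2ε_k) ) div η − ε_k Σ_{i,j} ∂u_k/∂x_i ∂u_k/∂x_j ∂η^i/∂x_j ] dx → ∫_Ω [ div η − Σ_{i,j} ρ_i ρ_j ∂η^i/∂x_j ] dλ as k → ∞. -/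

import Mathlib

open Filter MeasureTheory Topology
open scoped RealInnerProductSpace

namespace PaperAC

/-- The partial derivative `∂f/∂x_j` of a scalar function on `ℝ^N`. -/
noncomputable def pdv {N : ℕ} (f : (Fin N → ℝ) → ℝ) (j : Fin N) (x : Fin N → ℝ) : ℝ :=
  fderiv ℝ f x (Pi.single j 1)

/-- The advection field `(η·∇)η`, with components `((η·∇)η)^i = ∑_j η^j ∂η^i/∂x_j`. -/
noncomputable def advf {N : ℕ} (η : (Fin N → ℝ) → (Fin N → ℝ)) (x : Fin N → ℝ) :
    Fin N → ℝ :=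
  fun i => ∑ j, η x j * pdv (fun z => η z i) j x

/-- The gradient `∇u` of a scalar function on `ℝ^N`. -/
noncomputable def grad {N : ℕ} (u : (Fin N → ℝ) → ℝ) (x : Fin N → ℝ) : Fin N → ℝ :=
  fun i => pdv u i x

/-- `X₀ := (D²u·η, η) + (∇u, 2(η·∇)η − ζ)`. -/
noncomputable def X0 {N : ℕ} (u : (Fin N → ℝ) → ℝ) (η ζ : (Fin N → ℝ) → (Fin N → ℝ))
    (y : Fin N → ℝ) : ℝ :=
  (∑ i, ∑ j, pdv (pdv u i) j y * η y i * η y j)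
    + ∑ i, pdv u i y * (2 * advf η y i - ζ y i)

/-- `−∇u·η`. -/
noncomputable def nGradDot {N : ℕ} (u : (Fin N → ℝ) → ℝ) (η : (Fin N → ℝ) → (Fin N → ℝ))
    (x : Fin N → ℝ) : ℝ :=
  -(∑ i, pdv u i x * η x i)

/-- `F_z`, the partial derivative of `F = F(z,p)` in the scalar variable. -/
noncomputable def Fz {N : ℕ} (F : ℝ × (Fin N → ℝ) → ℝ) (z : ℝ) (p : Fin N → ℝ) : ℝ :=
  fderiv ℝ F (z, p) (1, 0)

/-- `F_{p_i}`. -/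
noncomputable def Fp {N : ℕ} (F : ℝ × (Fin N → ℝ) → ℝ) (i : Fin N) (z : ℝ) (p : Fin N → ℝ) :
    ℝ :=
  fderiv ℝ F (z, p) (0, Pi.single i 1)

/-- `F_{zz}`. -/
noncomputable def Fzz {N : ℕ} (F : ℝ × (Fin N → ℝ) → ℝ) (z : ℝ) (p : Fin N → ℝ) : ℝ :=
  fderiv ℝ (fun q => fderiv ℝ F q (1, 0)) (z, p) (1, 0)

/-- `F_{z p_i}`. -/
noncomputable def Fzp {N : ℕ} (F : ℝ × (Fin N → ℝ) → ℝ) (i : Fin N) (z : ℝ) (p : Fin N → ℝ) :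
    ℝ :=
  fderiv ℝ (fun q => fderiv ℝ F q ((0 : ℝ), Pi.single i 1)) (z, p) (1, 0)

/-- `F_{p_i p_j}`. -/
noncomputable def Fpp {N : ℕ} (F : ℝ × (Fin N → ℝ) → ℝ) (i j : Fin N) (z : ℝ)
    (p : Fin N → ℝ) : ℝ :=
  fderiv ℝ (fun q => fderiv ℝ F q ((0 : ℝ), Pi.single j 1)) (z, p) ((0 : ℝ), Pi.single i 1)

/-- `𝔄₁(t) = A(u ∘ Φ_t⁻¹) = ∫_Ω F(u_t, ∇u_t)`, the inner deformation of the functional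
`A(w) := ∫_Ω F(w, ∇w)`. -/
noncomputable def innerA {N : ℕ} (Ω : Set (Fin N → ℝ)) (F : ℝ × (Fin N → ℝ) → ℝ)
    (u : (Fin N → ℝ) → ℝ) (Φ : ℝ → (Fin N → ℝ) → (Fin N → ℝ)) (t : ℝ) : ℝ :=
  ∫ y in Ω, F (u (Function.invFun (Φ t) y),
      grad (fun z => u (Function.invFun (Φ t) z)) y)

/-- `t ↦ A(u + tφ) = ∫_Ω F(u + tφ, ∇u + t∇φ)`, the outer deformation of the functional
`A(w) := ∫_Ω F(w, ∇w)`. -/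
noncomputable def gateauxA {N : ℕ} (Ω : Set (Fin N → ℝ)) (F : ℝ × (Fin N → ℝ) → ℝ)
    (u φ : (Fin N → ℝ) → ℝ) (t : ℝ) : ℝ :=
  ∫ x in Ω, F (u x + t * φ x, fun i => pdv u i x + t * pdv φ i x)

/-- The matrix `M_t(x)` with entries `δ_{ij} + t ∂η^i/∂x_j + (t²/2) ∂W^i/∂x_j`. -/
noncomputable def defMat {N : ℕ} (η W : (Fin N → ℝ) → (Fin N → ℝ)) (t : ℝ)
    (x : Fin N → ℝ) : Matrix (Fin N) (Fin N) ℝ :=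
  Matrix.of fun i j =>
    (if i = j then (1 : ℝ) else 0) + t * pdv (fun z => η z i) j x
      + (t ^ 2 / 2) * pdv (fun z => W z i) j x

/-- `Φ(a) := ∫_0^a |s² − 1| ds`. -/
noncomputable def PhiAC (a : ℝ) : ℝ := ∫ s in (0 : ℝ)..a, |s ^ 2 - 1|

/-- All partial derivatives (= iterated Fréchet derivatives) of `f` up to order `n` are
bounded; the case `i = 0` says `f` itself is bounded. -/
def BddUpTo {N : ℕ} {E : Type*} [NormedAddCommGroup E] [NormedSpace ℝ E]
    (n : ℕ) (f : (Fin N → ℝ) → E) : Prop :=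
  ∀ i : ℕ, i ≤ n → ∃ C : ℝ, ∀ x, ‖iteratedFDeriv ℝ i f x‖ ≤ C

/-!
Write the energy density as `ε|∇u|²` minus half the discrepancy. Since the discrepancy vanishes in
`L¹` and `div η` is bounded, the first variation has the same limit as
`∫ (ε|∇u|² div η - ε ∑ᵢⱼ ∂ᵢu ∂ⱼu ∂ⱼηⁱ) = ∫ ∑ᵢⱼ ε ∂ᵢu ∂ⱼu (div η δᵢⱼ - ∂ⱼηⁱ)`,
the contraction of `ε ∇u ⊗ ∇u` with a bounded continuous tensor. Its limit is
`∫ (|ρ|² div η - ∑ᵢⱼ ρᵢ ρⱼ ∂ⱼηⁱ) dλ`, and `|ρ| = 1`.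
-/

open scoped BoundedContinuousFunction

theorem abs_mul_le_sum_sq {ι : Type*} [Fintype ι] (v : ι → ℝ) (i j : ι) :
    |v i * v j| ≤ ∑ m, v m ^ 2 := by
  have hle (m : ι) : v m ^ 2 ≤ ∑ m, v m ^ 2 :=
    Finset.single_le_sum (fun m _ => sq_nonneg (v m)) (Finset.mem_univ m)
  have hamgm := two_mul_le_add_sq |v i| |v j|
  rw [sq_abs, sq_abs] at hamgm
  rw [abs_mul]
  linarith [hle i, hle j]

theorem sum_mul_trace_smul_one_sub_apply {X ι : Type*} [TopologicalSpace X] [Fintype ι]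
    [DecidableEq ι] (M : Matrix ι ι ℝ) (A : Matrix ι ι (X →ᵇ ℝ)) (x : X) :
    ∑ i, ∑ j, M i j * (A.trace • (1 : Matrix ι ι (X →ᵇ ℝ)) - A) i j x =
      M.trace * A.trace x - ∑ i, ∑ j, M i j * A i j x := by
  have hdiag (i j : ι) : (A.trace • (1 : Matrix ι ι (X →ᵇ ℝ))) i j x =
      if i = j then A.trace x else 0 := by
    by_cases hij : i = j <;> simp [hij]
  simp only [Matrix.sub_apply, BoundedContinuousFunction.sub_apply, hdiag, mul_sub, mul_ite,
    mul_zero, Finset.sum_sub_distrib, Finset.sum_ite_eq, Finset.mem_univ, if_true,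
    ← Finset.sum_mul]
  rfl

section Integral

variable {X ι κ : Type*} [MeasurableSpace X] {μ ν : Measure X} {l : Filter κ}

theorem tendsto_integral_finsetSum {E : Type*} [NormedAddCommGroup E] [NormedSpace ℝ E]
    {s : Finset ι} {f : κ → ι → X → E} {g : ι → X → E}
    (hf : ∀ k, ∀ i ∈ s, Integrable (f k i) μ) (hg : ∀ i ∈ s, Integrable (g i) ν)
    (hfg : ∀ i ∈ s, Tendsto (fun k => ∫ x, f k i x ∂μ) l (𝓝 (∫ x, g i x ∂ν))) :
    Tendsto (fun k => ∫ x, ∑ i ∈ s, f k i x ∂μ) l (𝓝 (∫ x, ∑ i ∈ s, g i x ∂ν)) := by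
  simp only [integral_finsetSum s (hf _), integral_finsetSum s hg]
  exact tendsto_finsetSum s hfg

theorem tendsto_integral_mul_of_tendsto_integral_abs {f : κ → X → ℝ} {b : X → ℝ} {C : ℝ}
    (hf : ∀ k, Integrable (f k) μ) (hb : ∀ᵐ x ∂μ, |b x| ≤ C)
    (hlim : Tendsto (fun k => ∫ x, |f k x| ∂μ) l (𝓝 0)) :
    Tendsto (fun k => ∫ x, f k x * b x ∂μ) l (𝓝 0) := by
  refine squeeze_zero_norm (fun k => ?_) (by simpa only [zero_mul] using hlim.mul_const C)
  rw [← integral_mul_const]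
  refine norm_integral_le_of_norm_le ((hf k).abs.mul_const C) (hb.mono fun x hx => ?_)
  rw [Real.norm_eq_abs, abs_mul]
  gcongr

theorem integrable_mul_of_integrable_sum_sq [Fintype ι] {v : X → ι → ℝ}
    (hv : ∀ i, AEStronglyMeasurable (fun x => v x i) μ)
    (hsq : Integrable (fun x => ∑ i, v x i ^ 2) μ) (i j : ι) :
    Integrable (fun x => v x i * v x j) μ :=
  hsq.mono' ((hv i).mul (hv j)) (ae_of_all _ fun x => abs_mul_le_sum_sq (v x) i j)

end Integral

section TensorConvergence

variable {X ι κ : Type*} [TopologicalSpace X] [MeasurableSpace X] [OpensMeasurableSpace X]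
  {μ ν : Measure X} {l : Filter κ} [Fintype ι]

theorem integrable_mul_boundedContinuousFunction {f : X → ℝ} (hf : Integrable f μ) (φ : X →ᵇ ℝ) :
    Integrable (fun x => f x * φ x) μ :=
  hf.mul_bdd φ.continuous.aestronglyMeasurable (ae_of_all _ φ.norm_coe_le_norm)

theorem tendsto_integral_contraction {M : κ → X → Matrix ι ι ℝ} {L : X → Matrix ι ι ℝ}
    (hM : ∀ k i j, Integrable (fun x => M k x i j) μ)
    (hL : ∀ i j, Integrable (fun x => L x i j) ν)
    (hML : ∀ (φ : X →ᵇ ℝ) (i j : ι),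
      Tendsto (fun k => ∫ x, M k x i j * φ x ∂μ) l (𝓝 (∫ x, L x i j * φ x ∂ν)))
    (B : Matrix ι ι (X →ᵇ ℝ)) :
    Tendsto (fun k => ∫ x, ∑ i, ∑ j, M k x i j * B i j x ∂μ) l
      (𝓝 (∫ x, ∑ i, ∑ j, L x i j * B i j x ∂ν)) := by
  have hMB (k : κ) (i j : ι) := integrable_mul_boundedContinuousFunction (hM k i j) (B i j)
  have hLB (i j : ι) := integrable_mul_boundedContinuousFunction (hL i j) (B i j)
  exact tendsto_integral_finsetSum (fun k i _ => integrable_finsetSum _ fun j _ => hMB k i j)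
    (fun i _ => integrable_finsetSum _ fun j _ => hLB i j) fun i _ =>
      tendsto_integral_finsetSum (fun k j _ => hMB k i j) (fun j _ => hLB i j) fun j _ =>
        hML (B i j) i j

theorem tendsto_integral_energy_mul_trace_sub_contraction
    {M : κ → X → Matrix ι ι ℝ} {L : X → Matrix ι ι ℝ} {w : κ → X → ℝ}
    (hM : ∀ k i j, Integrable (fun x => M k x i j) μ) (hw : ∀ k, Integrable (w k) μ)
    (hL : ∀ i j, Integrable (fun x => L x i j) ν)
    (hML : ∀ (φ : X →ᵇ ℝ) (i j : ι),
      Tendsto (fun k => ∫ x, M k x i j * φ x ∂μ) l (𝓝 (∫ x, L x i j * φ x ∂ν)))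
    (hdiscr : Tendsto (fun k => ∫ x, |(M k x).trace - w k x| ∂μ) l (𝓝 0))
    (A : Matrix ι ι (X →ᵇ ℝ)) :
    Tendsto
      (fun k => ∫ x, (((M k x).trace / 2 + w k x / 2) * A.trace x
        - ∑ i, ∑ j, M k x i j * A i j x) ∂μ) l
      (𝓝 (∫ x, ((L x).trace * A.trace x - ∑ i, ∑ j, L x i j * A i j x) ∂ν)) := by
  classical
  let B : Matrix ι ι (X →ᵇ ℝ) := A.trace • 1 - A
  have hξ (k : κ) : Integrable (fun x => (M k x).trace - w k x) μ :=
    (integrable_finsetSum _ fun i _ => hM k i i).sub (hw k)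
  have hξA := tendsto_integral_mul_of_tendsto_integral_abs hξ
    (ae_of_all _ A.trace.norm_coe_le_norm) hdiscr
  have hMB (k : κ) : Integrable (fun x => ∑ i, ∑ j, M k x i j * B i j x) μ :=
    integrable_finsetSum _ fun i _ => integrable_finsetSum _ fun j _ =>
      integrable_mul_boundedContinuousFunction (hM k i j) (B i j)
  have hsplit (k : κ) :
      ∫ x, (((M k x).trace / 2 + w k x / 2) * A.trace x - ∑ i, ∑ j, M k x i j * A i j x) ∂μ =
        ∫ x, ∑ i, ∑ j, M k x i j * B i j x ∂μ
          - 1 / 2 * ∫ x, ((M k x).trace - w k x) * A.trace x ∂μ := by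
    rw [← integral_const_mul, ← integral_sub (hMB k)
      ((integrable_mul_boundedContinuousFunction (hξ k) A.trace).const_mul _)]
    refine integral_congr_ae (ae_of_all _ fun x => ?_)
    simp only [B, sum_mul_trace_smul_one_sub_apply]
    ring
  simpa only [hsplit, B, sum_mul_trace_smul_one_sub_apply, mul_zero, sub_zero] using
    (tendsto_integral_contraction hM hL hML B).sub (hξA.const_mul (1 / 2))

end TensorConvergence

theorem integrableOn_of_continuous_of_isBounded {X E : Type*} [MetricSpace X] [ProperSpace X]
    [MeasurableSpace X] [OpensMeasurableSpace X] [NormedAddCommGroup E] {μ : Measure X}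
    [IsFiniteMeasureOnCompacts μ] {s : Set X} {f : X → E} (hs : Bornology.IsBounded s)
    (hf : Continuous f) : IntegrableOn f s μ :=
  (hf.continuousOn.integrableOn_compact hs.isCompact_closure).mono_set subset_closure

section PartialDerivative

variable {N : ℕ}

theorem continuous_pdv {f : (Fin N → ℝ) → ℝ} (hf : ContDiff ℝ 1 f) (j : Fin N) :
    Continuous (pdv f j) :=
  (hf.continuous_fderiv one_ne_zero).clm_apply continuous_const

theorem integrableOn_sum_pdv_sq {μ : Measure (Fin N → ℝ)} [IsFiniteMeasureOnCompacts μ]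
    {s : Set (Fin N → ℝ)} (hs : Bornology.IsBounded s) {f : (Fin N → ℝ) → ℝ}
    (hf : ContDiff ℝ 1 f) : IntegrableOn (fun x => ∑ i, pdv f i x ^ 2) s μ :=
  integrableOn_of_continuous_of_isBounded hs <|
    continuous_finsetSum _ fun i _ => (continuous_pdv hf i).pow 2

theorem abs_pdv_apply_le_norm_fderiv {η : (Fin N → ℝ) → (Fin N → ℝ)} {x : Fin N → ℝ}
    (hη : DifferentiableAt ℝ η x) (i j : Fin N) :
    |pdv (fun z => η z i) j x| ≤ ‖fderiv ℝ η x‖ :=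
  calc |pdv (fun z => η z i) j x| = ‖fderiv ℝ η x (Pi.single j 1) i‖ := by
        rw [pdv, fderiv_apply hη i]; rfl
    _ ≤ ‖fderiv ℝ η x (Pi.single j 1)‖ := norm_le_pi_norm _ i
    _ ≤ ‖fderiv ℝ η x‖ * ‖(Pi.single j 1 : Fin N → ℝ)‖ := (fderiv ℝ η x).le_opNorm _
    _ = ‖fderiv ℝ η x‖ := by simp [Pi.norm_single]

theorem exists_boundedContinuous_jacobian {η : (Fin N → ℝ) → (Fin N → ℝ)} (hη : ContDiff ℝ 1 η)
    (hbdd : ∃ C, ∀ x, ‖fderiv ℝ η x‖ ≤ C) :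
    ∃ A : Matrix (Fin N) (Fin N) ((Fin N → ℝ) →ᵇ ℝ), ∀ i j x,
      A i j x = pdv (fun z => η z i) j x := by
  obtain ⟨C, hC⟩ := hbdd
  refine ⟨Matrix.of fun i j => .ofNormedAddCommGroup (pdv (fun z => η z i) j)
    (continuous_pdv (contDiff_pi.1 hη i) j) C fun x => ?_, fun i j x => rfl⟩
  exact (abs_pdv_apply_le_norm_fderiv (hη.differentiable one_ne_zero x) i j).trans (hC x)

end PartialDerivative

/-- `w k` takes the place of `(1 - u_k²)² / ε_k`, and `μ`, `ν` that of Lebesgue measure and `λ`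
on `Ω`. -/
theorem first_inner_variation_allen_cahn_limit_general {N : ℕ} {κ : Type*} {l : Filter κ}
    {μ ν : Measure (Fin N → ℝ)} [IsFiniteMeasure ν] {ε : κ → ℝ}
    {u w : κ → (Fin N → ℝ) → ℝ} (hu : ∀ k, ContDiff ℝ 1 (u k))
    (hgrad : ∀ k, Integrable (fun x => ∑ i, pdv (u k) i x ^ 2) μ)
    (hw : ∀ k, Integrable (w k) μ)
    {ρ : (Fin N → ℝ) → (Fin N → ℝ)} (hρm : AEMeasurable ρ ν)
    (hρ1 : ∀ᵐ x ∂ν, ∑ i, ρ x i ^ 2 = 1)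
    (hquad : ∀ (φ : (Fin N → ℝ) →ᵇ ℝ) (i j : Fin N),
      Tendsto (fun k => ∫ x, ε k * pdv (u k) i x * pdv (u k) j x * φ x ∂μ) l
        (𝓝 (∫ x, ρ x i * ρ x j * φ x ∂ν)))
    (hdiscr : Tendsto
      (fun k => ∫ x, |ε k * (∑ i, pdv (u k) i x ^ 2) - w k x| ∂μ) l (𝓝 0))
    {η : (Fin N → ℝ) → (Fin N → ℝ)} (hη : ContDiff ℝ 1 η)
    (hηb : ∃ C, ∀ x, ‖fderiv ℝ η x‖ ≤ C) :
    Tendsto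
      (fun k => ∫ x, ((ε k * (∑ i, pdv (u k) i x ^ 2) / 2 + w k x / 2)
            * (∑ i, pdv (fun z => η z i) i x)
          - ε k * ∑ i, ∑ j, pdv (u k) i x * pdv (u k) j x * pdv (fun z => η z i) j x) ∂μ) l
      (𝓝 (∫ x, ((∑ i, pdv (fun z => η z i) i x)
          - ∑ i, ∑ j, ρ x i * ρ x j * pdv (fun z => η z i) j x) ∂ν)) := by
  obtain ⟨A, hA⟩ := exists_boundedContinuous_jacobian hη hηb
  let M (k : κ) (x : Fin N → ℝ) : Matrix (Fin N) (Fin N) ℝ :=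
    Matrix.of fun i j => ε k * pdv (u k) i x * pdv (u k) j x
  let L (x : Fin N → ℝ) : Matrix (Fin N) (Fin N) ℝ := Matrix.of fun i j => ρ x i * ρ x j
  have hM (k : κ) (i j : Fin N) : Integrable (fun x => M k x i j) μ := by
    simpa only [M, Matrix.of_apply, mul_assoc] using (integrable_mul_of_integrable_sum_sq
      (fun i => (continuous_pdv (hu k) i).aestronglyMeasurable) (hgrad k) i j).const_mul (ε k)
  have hL : ∀ i j, Integrable (fun x => L x i j) ν :=
    integrable_mul_of_integrable_sum_sq (fun i => (hρm.eval i).aestronglyMeasurable)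
      ((integrable_const 1).congr (hρ1.mono fun _ hx => hx.symm))
  have hMtr (k : κ) (x : Fin N → ℝ) : (M k x).trace = ε k * ∑ i, pdv (u k) i x ^ 2 := by
    simp only [M, Matrix.trace, Matrix.diag_apply, Matrix.of_apply, Finset.mul_sum, sq, mul_assoc]
  have hLtr : ∀ᵐ x ∂ν, (L x).trace = 1 := by
    simpa only [L, Matrix.trace, Matrix.diag_apply, Matrix.of_apply, ← sq] using hρ1
  have hAtr (x : Fin N → ℝ) : A.trace x = ∑ i, pdv (fun z => η z i) i x := by
    simp only [Matrix.trace, Matrix.diag_apply, BoundedContinuousFunction.sum_apply, hA]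
  have hlim := tendsto_integral_energy_mul_trace_sub_contraction (w := w) hM hw hL hquad
    (by simpa only [hMtr] using hdiscr) A
  have hlimit : ∫ x, ((L x).trace * A.trace x - ∑ i, ∑ j, L x i j * A i j x) ∂ν =
      ∫ x, (A.trace x - ∑ i, ∑ j, L x i j * A i j x) ∂ν :=
    integral_congr_ae (hLtr.mono fun x hx => by simp only [hx, one_mul])
  rw [hlimit] at hlim
  simp only [hMtr, hAtr, hA] at hlim
  simpa only [M, L, Matrix.of_apply, mul_assoc, ← Finset.mul_sum] using hlim

/-- Convergence of the first inner variation of the Allen–Cahn energy: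
under the quadratic-convergence hypothesis for `ε_k ∇u_k ⊗ ∇u_k` and vanishing of the
discrepancy, `δE_{ε_k}(u_k, η) → ∫_Ω (div η − ∑_{i,j} ρ_i ρ_j ∂η^i/∂x_j) dλ`. -/
theorem first_inner_variation_allen_cahn_limit
    (N : ℕ) (Ω : Set (Fin N → ℝ)) (hΩo : IsOpen Ω) (hΩb : Bornology.IsBounded Ω)
    (ε : ℕ → ℝ) (hε : ∀ k, 0 < ε k) (hε0 : Tendsto ε atTop (𝓝 0))
    (u : ℕ → (Fin N → ℝ) → ℝ) (hu : ∀ k, ContDiff ℝ 1 (u k))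
    (lam0 : Measure (Fin N → ℝ)) [IsFiniteMeasure lam0]
    (ρ : (Fin N → ℝ) → (Fin N → ℝ)) (hρm : Measurable ρ)
    (hρ1 : ∀ᵐ x ∂(lam0.restrict Ω), Real.sqrt (∑ i, ρ x i ^ 2) = 1)
    (hquad : ∀ φ : (Fin N → ℝ) → ℝ, ContinuousOn φ Ω → (∃ C : ℝ, ∀ x ∈ Ω, |φ x| ≤ C) →
      ∀ i j : Fin N,
        Tendsto (fun k => ∫ x in Ω, ε k * pdv (u k) i x * pdv (u k) j x * φ x) atTop
          (𝓝 (∫ x in Ω, ρ x i * ρ x j * φ x ∂lam0)))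
    (hdiscr : Tendsto
      (fun k => ∫ x in Ω,
        |ε k * (∑ i, pdv (u k) i x ^ 2) - (1 - u k x ^ 2) ^ 2 / ε k|) atTop (𝓝 0))
    (η : (Fin N → ℝ) → (Fin N → ℝ))
    (hη : ContDiff ℝ 1 η) (hηb : BddUpTo 1 η) :
    Tendsto
      (fun k => ∫ x in Ω,
        ((ε k * (∑ i, pdv (u k) i x ^ 2) / 2 + (1 - u k x ^ 2) ^ 2 / (2 * ε k))
            * (∑ i, pdv (fun z => η z i) i x)
          - ε k * ∑ i, ∑ j, pdv (u k) i x * pdv (u k) j x * pdv (fun z => η z i) j x))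
      atTop
      (𝓝 (∫ x in Ω,
        ((∑ i, pdv (fun z => η z i) i x)
          - ∑ i, ∑ j, ρ x i * ρ x j * pdv (fun z => η z i) j x) ∂lam0)) := by
  have hpot (k : ℕ) : IntegrableOn (fun x => (1 - u k x ^ 2) ^ 2 / ε k) Ω :=
    integrableOn_of_continuous_of_isBounded hΩb <|
      ((continuous_const.sub ((hu k).continuous.pow 2)).pow 2).div_const _
  simpa only [div_div, mul_comm (ε _) 2] using
    first_inner_variation_allen_cahn_limit_general hu
      (fun k => integrableOn_sum_pdv_sq hΩb (hu k)) hpot hρm.aemeasurable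
      (hρ1.mono fun _ => Real.sqrt_eq_one.1)
      (fun φ => hquad φ φ.continuous.continuousOn ⟨‖φ‖, fun x _ => φ.norm_coe_le_norm x⟩) hdiscr hη
      (by simpa only [norm_iteratedFDeriv_one] using hηb 1 le_rfl)

end PaperAC
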